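/- arXiv:2107.09432 — 12 statements merged into one kernel-verified Lean document; each statement's English description precedes it below -/
import Mathlib

section
/- Let c₁, c₂, c₃, c₄ be points of the Euclidean plane ℝ² and let κ₁, κ₂, κ₃, κ₄ be nonzero real numbers such that for all i ≠ j the oriented tangency condition κᵢ²·κⱼ²·‖cᵢ − cⱼ‖² = (κᵢ + κⱼ)² holds (i.e., the four disks with centers cᵢ and signed curvatures κᵢ are pairwise tangent). Then (κ₁ + κ₂ + κ₃ + κ₄)² = 2(κ₁² + κ₂² + κ₃² + κ₄²). -/
/-!
Three vectors in the plane are linearly dependent, so the Gram determinant of `c₁ - c₀`,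
`c₂ - c₀`, `c₃ - c₀` vanishes. With signed radii `rᵢ = 1 / κᵢ`, tangency says
`‖cᵢ - cⱼ‖² = (rᵢ + rⱼ)²`, so by polarization
`⟪cᵢ - c₀, cⱼ - c₀⟫ = r₀² + r₀ rᵢ + r₀ rⱼ - rᵢ rⱼ` for `i ≠ j`.
Substituted in the determinant, these values give the polynomial
`4 (r₀ r₁ r₂ r₃)² ((∑ κᵢ)² - 2 ∑ κᵢ²)`, and the factor
`(r₀ r₁ r₂ r₃)²` is nonzero.
-/

/-- The Gram determinant of three vectors `(a, b)`, `(p, q)`, `(s, t)` of the plane is zero. -/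
lemma gram_det_plane (a b p q s t : ℝ) :
    (a ^ 2 + b ^ 2) * (p ^ 2 + q ^ 2) * (s ^ 2 + t ^ 2)
      + 2 * (a * p + b * q) * (a * s + b * t) * (p * s + q * t)
      - (a ^ 2 + b ^ 2) * (p * s + q * t) ^ 2
      - (p ^ 2 + q ^ 2) * (a * s + b * t) ^ 2
      - (s ^ 2 + t ^ 2) * (a * p + b * q) ^ 2 = 0 := by
  ring

/-- **Descartes' Circle Theorem.** If four disks in the plane, with centers `c i` and
nonzero signed curvatures `κ i`, are pairwise (oriented) tangent, i.e.
`κᵢ² κⱼ² ‖cᵢ - cⱼ‖² = (κᵢ + κⱼ)²` for all `i ≠ j`, then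
`(κ₁ + κ₂ + κ₃ + κ₄)² = 2 (κ₁² + κ₂² + κ₃² + κ₄²)`. -/
theorem descartes_circle_theorem
    (c : Fin 4 → EuclideanSpace ℝ (Fin 2)) (κ : Fin 4 → ℝ)
    (hκ : ∀ i, κ i ≠ 0)
    (htan : ∀ i j, i ≠ j → (κ i) ^ 2 * (κ j) ^ 2 * ‖c i - c j‖ ^ 2 = (κ i + κ j) ^ 2) :
    (κ 0 + κ 1 + κ 2 + κ 3) ^ 2 = 2 * ((κ 0) ^ 2 + (κ 1) ^ 2 + (κ 2) ^ 2 + (κ 3) ^ 2) := by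
  obtain ⟨r, hr⟩ : ∃ r : Fin 4 → ℝ, ∀ i, r i = (κ i)⁻¹ := ⟨fun i => (κ i)⁻¹, fun _ => rfl⟩
  have hr0 : ∀ i, r i ≠ 0 := fun i => by rw [hr]; exact inv_ne_zero (hκ i)
  have hκr : ∀ i, κ i = (r i)⁻¹ := fun i => by rw [hr, inv_inv]
  have hd : ∀ i j, i ≠ j →
      (c i 0 - c j 0) ^ 2 + (c i 1 - c j 1) ^ 2 = (r i + r j) ^ 2 := by
    intro i j hij
    have h := htan i j hij
    rw [EuclideanSpace.norm_sq_eq, Fin.sum_univ_two] at h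
    simp only [PiLp.sub_apply, Real.norm_eq_abs, sq_abs] at h
    have hi := hr0 i
    have hj := hr0 j
    rw [hκr i, hκr j] at h
    field_simp at h
    linarith
  have hin : ∀ i j, i ≠ 0 → j ≠ 0 → i ≠ j →
      (c i 0 - c 0 0) * (c j 0 - c 0 0) + (c i 1 - c 0 1) * (c j 1 - c 0 1)
        = r 0 ^ 2 + r 0 * r i + r 0 * r j - r i * r j := by
    intro i j hi hj hij
    linear_combination (hd i 0 hi + hd j 0 hj - hd i j hij) / 2
  have hG := gram_det_plane (c 1 0 - c 0 0) (c 1 1 - c 0 1) (c 2 0 - c 0 0) (c 2 1 - c 0 1)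
    (c 3 0 - c 0 0) (c 3 1 - c 0 1)
  rw [hd 1 0 (by decide), hd 2 0 (by decide), hd 3 0 (by decide),
    hin 1 2 (by decide) (by decide) (by decide), hin 1 3 (by decide) (by decide) (by decide),
    hin 2 3 (by decide) (by decide) (by decide)] at hG
  have h0 := hr0 0
  have h1 := hr0 1
  have h2 := hr0 2
  have h3 := hr0 3
  rw [hκr 0, hκr 1, hκr 2, hκr 3]
  field_simp
  linear_combination hG / 4
end

section
/- Let d ≥ 1. Let c₁, …, c_{d+2} be points of Euclidean space ℝ^d and let κ₁, …, κ_{d+2} be nonzero real numbers such that for all i ≠ j the oriented tangency condition κᵢ²·κⱼ²·‖cᵢ − cⱼ‖² = (κᵢ + κⱼ)² holds (i.e., the d+2 balls with centers cᵢ and signed curvatures κᵢ are pairwise tangent). Then (κ₁ + ⋯ + κ_{d+2})² = d·(κ₁² + ⋯ + κ_{d+2}²). -/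
/-!
The ball with center `c` and signed curvature `κ` is encoded by its inversive coordinates
`v = (κ c, κ, κ ‖c‖² - 1/κ)` in `ℝ^d × ℝ × ℝ`, a space of dimension `d + 2` with the Lorentzian form
`B((x, a, p), (y, b, q)) = 2 ⟪x, y⟫ - a q - p b`. Then `B(v, v) = 2` for every ball and
`B(v, v') = -2` for tangent balls, so the Gram matrix of the `d + 2` given vectors is `4 I - 2 J`,
with `J` the all-ones matrix. It is nonsingular for `d ≥ 1`, hence the vectors form a basis and the
vector `(0, 0, 1)` is a combination `∑ lⱼ vⱼ`. Pairing this with each `vᵢ` expresses `κᵢ` through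
`lᵢ` and `∑ lⱼ`, while its middle coordinate says `∑ lⱼ κⱼ = 0` (that is, `(0, 0, 1)` is a null
vector); eliminating `l` gives the relation.
-/

open scoped InnerProductSpace

/-- The Gram matrix of the inversive coordinates of pairwise tangent balls is `4 I - 2 J`. -/
lemma inversive_gram {n d : ℕ} (c : Fin n → EuclideanSpace ℝ (Fin d)) (κ : Fin n → ℝ)
    (hκ : ∀ i, κ i ≠ 0)
    (htan : ∀ i j, i ≠ j → (κ i) ^ 2 * (κ j) ^ 2 * ‖c i - c j‖ ^ 2 = (κ i + κ j) ^ 2)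
    (i j : Fin n) :
    2 * ⟪κ i • c i, κ j • c j⟫_ℝ - κ i * (κ j * ‖c j‖ ^ 2 - (κ j)⁻¹)
      - (κ i * ‖c i‖ ^ 2 - (κ i)⁻¹) * κ j = (if i = j then 4 else 0) - 2 := by
  have hi := hκ i
  have hj := hκ j
  rw [real_inner_smul_left, real_inner_smul_right]
  split_ifs with h
  · subst h
    rw [real_inner_self_eq_norm_sq]
    field_simp
    ring
  · have ht := htan i j h
    rw [norm_sub_sq_real] at ht
    field_simp
    linear_combination -ht

/-- The Gram matrix applied to a vector of coefficients `l`. -/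
lemma inversive_gram_sum {n d : ℕ} (c : Fin n → EuclideanSpace ℝ (Fin d)) (κ : Fin n → ℝ)
    (hκ : ∀ i, κ i ≠ 0)
    (htan : ∀ i j, i ≠ j → (κ i) ^ 2 * (κ j) ^ 2 * ‖c i - c j‖ ^ 2 = (κ i + κ j) ^ 2)
    (l : Fin n → ℝ) (i : Fin n) :
    2 * ⟪κ i • c i, ∑ j, l j • κ j • c j⟫_ℝ - κ i * (∑ j, l j * (κ j * ‖c j‖ ^ 2 - (κ j)⁻¹))
      - (κ i * ‖c i‖ ^ 2 - (κ i)⁻¹) * ∑ j, l j * κ j = 4 * l i - 2 * ∑ j, l j := by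
  have h : ∑ j, l j * (2 * ⟪κ i • c i, κ j • c j⟫_ℝ - κ i * (κ j * ‖c j‖ ^ 2 - (κ j)⁻¹)
      - (κ i * ‖c i‖ ^ 2 - (κ i)⁻¹) * κ j) = ∑ j, l j * ((if i = j then 4 else 0) - 2) :=
    Finset.sum_congr rfl fun j _ => by rw [inversive_gram c κ hκ htan]
  have h2 : ∑ j, l j * ((if i = j then (4 : ℝ) else 0) - 2) = 4 * l i - 2 * ∑ j, l j := by
    simp [mul_sub, Finset.sum_sub_distrib, ← Finset.sum_mul, mul_comm]
  rw [← h2, ← h, inner_sum, Finset.mul_sum, Finset.mul_sum, Finset.mul_sum,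
    ← Finset.sum_sub_distrib, ← Finset.sum_sub_distrib]
  refine Finset.sum_congr rfl fun j _ => ?_
  rw [real_inner_smul_right _ _ (l j)]
  ring

/-- **Soddy–Gosset theorem.** If `d + 2` balls in `ℝ^d` (`d ≥ 1`), with centers `c i` and
nonzero signed curvatures `κ i`, are pairwise (oriented) tangent, i.e.
`κᵢ² κⱼ² ‖cᵢ - cⱼ‖² = (κᵢ + κⱼ)²` for all `i ≠ j`, then
`(κ₁ + ⋯ + κ_{d+2})² = d (κ₁² + ⋯ + κ_{d+2}²)`. -/
theorem soddy_gosset (d : ℕ) (hd : 1 ≤ d)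
    (c : Fin (d + 2) → EuclideanSpace ℝ (Fin d)) (κ : Fin (d + 2) → ℝ)
    (hκ : ∀ i, κ i ≠ 0)
    (htan : ∀ i j, i ≠ j → (κ i) ^ 2 * (κ j) ^ 2 * ‖c i - c j‖ ^ 2 = (κ i + κ j) ^ 2) :
    (∑ i, κ i) ^ 2 = d * ∑ i, (κ i) ^ 2 := by
  have key := inversive_gram_sum c κ hκ htan
  let v : Fin (d + 2) → EuclideanSpace ℝ (Fin d) × ℝ × ℝ :=
    fun i => (κ i • c i, κ i, κ i * ‖c i‖ ^ 2 - (κ i)⁻¹)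
  have hT (l : Fin (d + 2) → ℝ) : Fintype.linearCombination ℝ v l =
      (∑ j, l j • κ j • c j, ∑ j, l j * κ j, ∑ j, l j * (κ j * ‖c j‖ ^ 2 - (κ j)⁻¹)) := by
    simp [Fintype.linearCombination_apply, v, Prod.ext_iff, Prod.fst_sum, Prod.snd_sum]
  have hinj : Function.Injective (Fintype.linearCombination ℝ v) := by
    rw [injective_iff_map_eq_zero]
    intro l hl
    rw [hT, Prod.mk_eq_zero, Prod.mk_eq_zero] at hl
    obtain ⟨h1, h2, h3⟩ := hl
    have h4 (i) : 4 * l i - 2 * ∑ j, l j = 0 := by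
      rw [← key l i, h1, h2, h3]; simp
    have h5 : ∑ i, (4 * l i - 2 * ∑ j, l j) = 0 := Finset.sum_eq_zero fun i _ => h4 i
    rw [Finset.sum_sub_distrib, ← Finset.mul_sum] at h5
    simp only [Finset.sum_const, Finset.card_univ, Fintype.card_fin, nsmul_eq_mul] at h5
    push_cast at h5
    have h6 : (d : ℝ) * ∑ j, l j = 0 := by linear_combination -h5 / 2
    have h7 : ∑ j, l j = 0 :=
      (mul_eq_zero.mp h6).resolve_left (by exact_mod_cast (by omega : d ≠ 0))
    ext i
    have := h4 i
    rw [h7] at this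
    simpa using this
  have hsurj : Function.Surjective (Fintype.linearCombination ℝ v) :=
    (LinearMap.injective_iff_surjective_of_finrank_eq_finrank (by simp)).mp hinj
  obtain ⟨l, hl⟩ := hsurj (0, 0, 1)
  rw [hT, Prod.mk.injEq, Prod.mk.injEq] at hl
  obtain ⟨h1, h2, h3⟩ := hl
  have h4 (i) : κ i = 2 * ∑ j, l j - 4 * l i := by
    have := key l i
    rw [h1, h2, h3, inner_zero_right] at this
    linear_combination -this
  generalize hS : ∑ j, l j = S at h4
  have h5 : ∑ i, κ i = 2 * d * S := by
    rw [Finset.sum_congr rfl fun i _ => h4 i, Finset.sum_sub_distrib, ← Finset.mul_sum, ← Finset.mul_sum, hS]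
    simp only [Finset.sum_const, Finset.card_univ, Fintype.card_fin, nsmul_eq_mul]
    push_cast
    ring
  have h6 : ∑ i, (κ i) ^ 2 = 2 * S * ∑ i, κ i := by
    have h7 : ∑ i, (κ i) ^ 2 = ∑ i, (2 * S * κ i - 4 * (l i * κ i)) :=
      Finset.sum_congr rfl fun i _ => by linear_combination κ i * h4 i
    rw [h7, Finset.sum_sub_distrib, ← Finset.mul_sum, ← Finset.mul_sum, h2]
    ring
  rw [h6, h5]
  ring
end

section
/- Let d ≥ 1 and let x₁, …, x_{d+2} be vectors in the Lorentzian space 𝕃^{d+1,1} = ℝ^{d+2} satisfying ⟨xᵢ, xᵢ⟩ = 1 for all i and ⟨xᵢ, xⱼ⟩ = −1 for all i ≠ j. Setting κᵢ = κ(xᵢ), one has (κ₁ + ⋯ + κ_{d+2})² = d·(κ₁² + ⋯ + κ_{d+2}²). -/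
/-!
Let `X` be the matrix with rows `xᵢ`, let `D = diag(1, …, 1, -1)` be the Lorentzian form and `J`
the all-ones matrix. The hypotheses say that the Gram matrix is `X D Xᵀ = 2 - J`, and
`(2 - J) (d - J) = 2d` because `J² = (d + 2) J`. A one-sided inverse of a square matrix is
two-sided, so `X (D Xᵀ (d - J)) = 2d` gives `D Xᵀ (d - J) X = 2d`, and, as `D² = 1`,
`Xᵀ (d - J) X = 2d D` (`transpose_mul_mul_eq`). Now evaluate both quadratic forms at the
isotropic vector `w = e_{d+2} - e_{d+1}`: since `X w = κ`, the left side is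
`d ∑ κᵢ² - (∑ κᵢ)²`, and the right side is `2d (1 - 1) = 0`.
-/

open Finset Matrix

/-- The Lorentzian product on `ℝ^n`:
`⟨x, y⟩ = x₁y₁ + ⋯ + x_{n-1}y_{n-1} − x_n y_n`. -/
noncomputable def lprod {n : ℕ} (x y : Fin n → ℝ) : ℝ :=
  ∑ i : Fin n, (if (i : ℕ) + 1 = n then -1 else 1) * x i * y i

/-- The curvature of a vector `x ∈ 𝕃^{d+1,1}`: `κ(x) = x_{d+2} − x_{d+1}`. -/
noncomputable def curv {d : ℕ} (x : Fin (d + 2) → ℝ) : ℝ :=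
  x ⟨d + 1, by omega⟩ - x ⟨d, by omega⟩

/-- The diagonal matrix `diag(1, …, 1, -1)` of the Lorentzian product. -/
noncomputable def lorentzForm (n : ℕ) : Matrix (Fin n) (Fin n) ℝ :=
  Matrix.diagonal fun i => if (i : ℕ) + 1 = n then -1 else 1

/-- The all-ones matrix. -/
def onesMatrix (n : ℕ) : Matrix (Fin n) (Fin n) ℝ := Matrix.of fun _ _ => 1

lemma lorentzForm_mul_self (n : ℕ) : lorentzForm n * lorentzForm n = 1 := by
  unfold lorentzForm
  rw [Matrix.diagonal_mul_diagonal, ← Matrix.diagonal_one]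
  congr 1
  funext i
  split_ifs <;> norm_num

lemma onesMatrix_mul_self (n : ℕ) : onesMatrix n * onesMatrix n = (n : ℝ) • onesMatrix n := by
  ext i j
  simp [onesMatrix, Matrix.mul_apply]

lemma gram_eq {n : ℕ} (x : Fin n → (Fin n → ℝ))
    (hnorm : ∀ i, lprod (x i) (x i) = 1)
    (htan : ∀ i j, i ≠ j → lprod (x i) (x j) = -1) :
    Matrix.of x * lorentzForm n * (Matrix.of x)ᵀ = (2 : ℝ) • 1 - onesMatrix n := by
  ext i j
  have h : (Matrix.of x * lorentzForm n * (Matrix.of x)ᵀ) i j = lprod (x i) (x j) := by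
    simp only [lorentzForm, lprod, Matrix.mul_apply (M := Matrix.of x * _), Matrix.mul_diagonal,
      Matrix.transpose_apply, Matrix.of_apply]
    exact Finset.sum_congr rfl fun k _ => by ring
  rw [h]
  by_cases hij : i = j
  · subst hij
    rw [hnorm]
    simp [onesMatrix]
    norm_num
  · rw [htan i j hij]
    simp [onesMatrix, Matrix.one_apply_ne hij]

/-- The Gram relation `X D Xᵀ = 2 - J`, inverted: up to the factor `2d`, the matrix `d - J` is the
inverse of `2 - J`. -/
lemma transpose_mul_mul_eq (d : ℕ) (hd : 1 ≤ d) (X : Matrix (Fin (d + 2)) (Fin (d + 2)) ℝ)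
    (hX : X * lorentzForm (d + 2) * Xᵀ = (2 : ℝ) • 1 - onesMatrix (d + 2)) :
    Xᵀ * ((d : ℝ) • 1 - onesMatrix (d + 2)) * X = (2 * d : ℝ) • lorentzForm (d + 2) := by
  have hd0 : (2 * d : ℝ) ≠ 0 := by positivity
  set D := lorentzForm (d + 2) with hD
  set M : Matrix (Fin (d + 2)) (Fin (d + 2)) ℝ := (d : ℝ) • 1 - onesMatrix (d + 2) with hM
  have hGM : ((2 : ℝ) • 1 - onesMatrix (d + 2)) * M = (2 * d : ℝ) • 1 := by
    rw [hM, sub_mul, mul_sub, mul_sub, onesMatrix_mul_self]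
    simp only [smul_mul_assoc, mul_smul_comm, one_mul, mul_one]
    push_cast
    module
  have h1 : X * ((2 * d : ℝ)⁻¹ • (D * Xᵀ * M)) = 1 := by
    rw [mul_smul_comm, ← mul_assoc, ← mul_assoc, hX, hGM, smul_smul, inv_mul_cancel₀ hd0, one_smul]
  have h2 : D * Xᵀ * M * X = (2 * d : ℝ) • 1 := by
    have h := mul_eq_one_comm.mp h1
    rw [smul_mul_assoc] at h
    rw [← h, smul_smul, mul_inv_cancel₀ hd0, one_smul]
  calc Xᵀ * M * X = D * D * (Xᵀ * M * X) := by rw [lorentzForm_mul_self, one_mul]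
    _ = D * (D * Xᵀ * M * X) := by simp only [mul_assoc]
    _ = (2 * d : ℝ) • D := by rw [h2, mul_smul_comm, mul_one]

/-- **Soddy–Gosset theorem, Lorentzian form.** If `x₁, …, x_{d+2}` are vectors of
`𝕃^{d+1,1}` with `⟨xᵢ, xᵢ⟩ = 1` and `⟨xᵢ, xⱼ⟩ = −1` for `i ≠ j`, then their curvatures
satisfy `(κ₁ + ⋯ + κ_{d+2})² = d (κ₁² + ⋯ + κ_{d+2}²)`. -/
theorem soddy_gosset_lorentzian (d : ℕ) (hd : 1 ≤ d)
    (x : Fin (d + 2) → (Fin (d + 2) → ℝ))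
    (hnorm : ∀ i, lprod (x i) (x i) = 1)
    (htan : ∀ i j, i ≠ j → lprod (x i) (x j) = -1) :
    (∑ i, curv (x i)) ^ 2 = d * ∑ i, (curv (x i)) ^ 2 := by
  have key := transpose_mul_mul_eq d hd (Matrix.of x) (gram_eq x hnorm htan)
  let a : Fin (d + 2) := ⟨d + 1, by omega⟩
  let b : Fin (d + 2) := ⟨d, by omega⟩
  let w : Fin (d + 2) → ℝ := Pi.single a 1 - Pi.single b 1
  let κ : Fin (d + 2) → ℝ := fun i => curv (x i)
  have hab : a ≠ b := by simp [a, b]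
  have hκ : Matrix.of x *ᵥ w = κ := by
    funext i
    simp [w, κ, curv, a, b, Matrix.mulVec_sub]
  have hleft : w ⬝ᵥ (((Matrix.of x)ᵀ * ((d : ℝ) • 1 - onesMatrix (d + 2)) * Matrix.of x) *ᵥ w)
      = d * ∑ i, κ i ^ 2 - (∑ i, κ i) ^ 2 := by
    have hJ : onesMatrix (d + 2) *ᵥ κ = fun _ => ∑ i, κ i := by
      funext i
      simp [onesMatrix, Matrix.mulVec, dotProduct]
    rw [← Matrix.mulVec_mulVec, ← Matrix.mulVec_mulVec, hκ, Matrix.dotProduct_mulVec,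
      Matrix.vecMul_transpose, hκ, Matrix.sub_mulVec, Matrix.smul_mulVec, Matrix.one_mulVec, hJ,
      dotProduct_sub, dotProduct_smul]
    simp only [dotProduct, smul_eq_mul, ← Finset.sum_mul, ← pow_two]
  have hright : w ⬝ᵥ (((2 * d : ℝ) • lorentzForm (d + 2)) *ᵥ w) = 0 := by
    rw [Matrix.smul_mulVec, dotProduct_smul]
    simp [w, lorentzForm, Matrix.mulVec_diagonal, sub_dotProduct, hab, hab.symm]
    simp [a, b]
  rw [key, hright] at hleft
  linarith
end

section
/- Let n ≥ 2 and let a₀, a₁, …, a_{n−1} be real numbers with aᵢ ≠ a_{i+1} for all 0 ≤ i ≤ n−2 and a_{n−1} ≠ 0. Then the corner matrix C(a₀, …, a_{n−1}), with (i,j) entry a_{max(i,j)}, is invertible and its inverse is the symmetric tridiagonal matrix B given by: B₀₀ = 1/(a₀ − a₁); B_{ii} = 1/(a_{i−1} − aᵢ) + 1/(aᵢ − a_{i+1}) for 0 < i < n−1; B_{(n−1)(n−1)} = 1/(a_{n−2} − a_{n−1}) + 1/a_{n−1}; B_{i,i+1} = B_{i+1,i} = −1/(aᵢ − a_{i+1})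 for 0 ≤ i ≤ n−2; and B_{ij} = 0 whenever |i − j| ≥ 2. -/
/-!
The matrix `B` is a second-difference operator. With the convention `a n = 0`, row `i` of `B`
sends a vector `f` with `f n = 0` to
`(f i - f (i - 1)) / (a (i - 1) - a i) + (f i - f (i + 1)) / (a i - a (i + 1))`,
the first term being absent for `i = 0` (`sum_tridiagonal_row` isolates the three terms that
survive in such a row). Column `j` of the corner matrix is `f k = a (max k j)`, which is constant
for `k ≤ j` and equals `a k` afterwards, so the two quotients are `-[j < i]` and `[j ≤ i]`.
Their sum is `[i = j]`, that is, `B * C = 1`, and a left inverse of a square matrix over a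
field is its inverse.
-/

open Finset Matrix

/-- Applying a tridiagonal row with diagonal entry `x`, right entry `y` and left entry `z` to `f`;
the neighbours of `i` that fall outside `0, …, n - 1` do not contribute. -/
lemma sum_tridiagonal_row (n i : ℕ) (hi : i < n) (x y z : ℝ) (f : ℕ → ℝ) :
    ∑ k ∈ range n, (if i = k then x else if i + 1 = k then y else if k + 1 = i then z else 0) * f k
      = x * f i + (if i + 1 < n then y * f (i + 1) else 0)
        + (if i = 0 then 0 else z * f (i - 1)) := by
  have split : ∀ k, (if i = k then x else if i + 1 = k then y else if k + 1 = i then z else 0) * f k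
      = (if i = k then x * f k else 0) + (if i + 1 = k then y * f k else 0)
        + (if k + 1 = i then z * f k else 0) := by
    intro k
    split_ifs <;> first | omega | simp
  simp_rw [split, sum_add_distrib, sum_ite_eq, mem_range, if_pos hi]
  congr 1
  rcases i with _ | m
  · simp
  · have hm : m < n := by omega
    simp [hm]

/-- **Inverse of a corner matrix.** For reals `a₀, …, a_{n−1}` with `aᵢ ≠ a_{i+1}` and
`a_{n−1} ≠ 0`, the corner matrix `C(a₀, …, a_{n−1})` (with `(i,j)` entry `a_{max(i,j)}`)
is invertible, and its inverse is the explicit symmetric tridiagonal matrix `B`. -/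
theorem corner_matrix_inverse (n : ℕ) (hn : 2 ≤ n) (a : ℕ → ℝ)
    (ha : ∀ i < n - 1, a i ≠ a (i + 1)) (ha' : a (n - 1) ≠ 0) :
    let C : Matrix (Fin n) (Fin n) ℝ := Matrix.of fun i j => a (max (i : ℕ) (j : ℕ))
    let B : Matrix (Fin n) (Fin n) ℝ := Matrix.of fun i j =>
      if (i : ℕ) = (j : ℕ) then
        (if (i : ℕ) = 0 then 1 / (a 0 - a 1)
         else if (i : ℕ) = n - 1 then 1 / (a (n - 2) - a (n - 1)) + 1 / a (n - 1)
         else 1 / (a ((i : ℕ) - 1) - a (i : ℕ)) + 1 / (a (i : ℕ) - a ((i : ℕ) + 1)))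
      else if (i : ℕ) + 1 = (j : ℕ) then -1 / (a (i : ℕ) - a ((i : ℕ) + 1))
      else if (j : ℕ) + 1 = (i : ℕ) then -1 / (a (j : ℕ) - a ((j : ℕ) + 1))
      else 0
    IsUnit C.det ∧ C⁻¹ = B := by
  intro C B
  have hBC : B * C = 1 := by
    ext i j
    obtain ⟨i, hi⟩ := i
    obtain ⟨j, hj⟩ := j
    have hrow : (B * C) ⟨i, hi⟩ ⟨j, hj⟩ = ∑ k ∈ range n,
        (if i = k then
          (if i = 0 then 1 / (a 0 - a 1)
           else if i = n - 1 then 1 / (a (n - 2) - a (n - 1)) + 1 / a (n - 1)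
           else 1 / (a (i - 1) - a i) + 1 / (a i - a (i + 1)))
         else if i + 1 = k then -1 / (a i - a (i + 1))
         else if k + 1 = i then -1 / (a (i - 1) - a i)
         else 0) * a (max k j) := by
      rw [Matrix.mul_apply, ← Fin.sum_univ_eq_sum_range (n := n)]
      refine Finset.sum_congr rfl fun k _ => ?_
      simp only [B, C, Matrix.of_apply]
      congr 1
      split_ifs with h1 h2 h3 h4 h5 <;> first | rfl | (subst i; rfl)
    rw [hrow, sum_tridiagonal_row n i hi, Matrix.one_apply]
    simp only [Fin.mk.injEq]
    rcases i with _ | m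
    · have h0 : a 0 - a 1 ≠ 0 := sub_ne_zero.2 (ha 0 (by omega))
      rcases Nat.eq_zero_or_pos j with rfl | hj0
      · simp [show 1 < n by omega]
        field_simp
        ring
      · simp [show 1 < n by omega, max_eq_right (show 1 ≤ j from hj0), hj0.ne]
        field_simp
        ring
    · have h0 : a m - a (m + 1) ≠ 0 := sub_ne_zero.2 (ha m (by omega))
      by_cases hlast : m + 2 = n
      · subst hlast
        -- In the last row `a n = 0`, so the second quotient is `f i / a (n - 1)`.
        have h1 : a (m + 1) ≠ 0 := ha'
        rcases Nat.lt_or_ge m j with hmj | hmj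
        · obtain rfl : j = m + 1 := by omega
          simp
          field_simp
          ring
        · simp [max_eq_left hmj, max_eq_left (show j ≤ m + 1 by omega),
            show m + 1 ≠ j by omega]
          field_simp
          ring
      · have h1 : a (m + 1) - a (m + 1 + 1) ≠ 0 := sub_ne_zero.2 (ha (m + 1) (by omega))
        have e1 : m + 1 ≠ n - 1 := by omega
        have e2 : m + 1 + 1 < n := by omega
        simp only [e1, e2, if_true, if_false, Nat.add_sub_cancel, Nat.succ_ne_zero]
        rcases Nat.lt_trichotomy j (m + 1) with hj1 | rfl | hj1
        · rw [max_eq_left (show j ≤ m by omega), max_eq_left (show j ≤ m + 1 by omega),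
            max_eq_left (show j ≤ m + 1 + 1 by omega), if_neg (by omega)]
          field_simp
          ring
        · rw [max_eq_right (show m ≤ m + 1 by omega), max_self,
            max_eq_left (show m + 1 ≤ m + 1 + 1 by omega), if_pos rfl]
          field_simp
          ring
        · rw [max_eq_right (show m ≤ j by omega), max_eq_right (show m + 1 ≤ j by omega),
            max_eq_right (show m + 1 + 1 ≤ j by omega), if_neg (by omega)]
          field_simp
          ring
  exact ⟨Matrix.isUnit_det_of_left_inverse hBC, Matrix.inv_eq_left_inv hBC⟩
end

section
/- Let n ≥ 2 and let a₀, a₁, …, a_{n−1} be real numbers with aᵢ ≠ a_{i+1} for all 0 ≤ i ≤ n−2 and a_{n−1} ≠ 0, and let X = (X₀, …, X_{n−1}) be a row vector of real numbers. Then X · C(a₀, …, a_{n−1})⁻¹ · Xᵀ = Σ_{i=0}^{n−2} (Xᵢ − X_{i+1})²/(aᵢ − a_{i+1}) + X_{n−1}²/a_{n−1}. -/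
/-!
Extend `a` and `X` by zero beyond `n - 1` and let `e k = a k - a (k + 1)`, `δ k = X k - X (k + 1)`
be the resulting backward differences, so that `e (n - 1) = a (n - 1)` and
`δ (n - 1) = X (n - 1)`. With `U` the upper triangular all-ones matrix, telescoping gives
`C = U * diagonal e * Uᵀ` and `X = U *ᵥ δ`. As `U` is unipotent and no `e k` vanishes, `C` is
invertible and `X ⬝ᵥ C⁻¹ *ᵥ X = δ ⬝ᵥ (diagonal e)⁻¹ *ᵥ δ = ∑ k, δ k ^ 2 / e k`.
-/

open Finset Matrix

/-- Truncation of a sequence to its first `n` terms, extended by zero. -/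
def cornerTrunc (n : ℕ) (f : ℕ → ℝ) (k : ℕ) : ℝ := if k < n then f k else 0

/-- Successive differences `f k - f (k + 1)` of the truncation of `f` to its first `n` terms. -/
def cornerDiff (n : ℕ) (f : ℕ → ℝ) (k : ℕ) : ℝ := cornerTrunc n f k - cornerTrunc n f (k + 1)

/-- The upper triangular all-ones matrix. -/
def cornerU (n : ℕ) : Matrix (Fin n) (Fin n) ℝ := Matrix.of fun i k => if i ≤ k then 1 else 0

lemma sum_ite_sub_succ (F : ℕ → ℝ) (m N : ℕ) (h : m ≤ N) :
    ∑ k ∈ Finset.range N, (if m ≤ k then F k - F (k + 1) else 0) = F m - F N := by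
  induction N, h using Nat.le_induction with
  | base =>
    rw [sub_self]
    refine Finset.sum_eq_zero fun k hk => if_neg ?_
    simpa using hk
  | succ N h ih => rw [Finset.sum_range_succ, ih, if_pos h]; ring

lemma sum_ite_cornerDiff (n : ℕ) (f : ℕ → ℝ) (m : ℕ) (h : m < n) :
    ∑ k : Fin n, (if m ≤ (k : ℕ) then cornerDiff n f k else 0) = f m := by
  rw [Fin.sum_univ_eq_sum_range (fun k => if m ≤ k then cornerDiff n f k else 0) n]
  unfold cornerDiff
  rw [sum_ite_sub_succ _ m n h.le]
  simp [cornerTrunc, h]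

lemma cornerU_mulVec (n : ℕ) (f : ℕ → ℝ) :
    (cornerU n *ᵥ fun k : Fin n => cornerDiff n f k) = fun i : Fin n => f i := by
  ext i
  simp only [Matrix.mulVec, dotProduct, cornerU, Matrix.of_apply, ite_mul, one_mul, zero_mul]
  exact sum_ite_cornerDiff n f i i.2

lemma corner_factorization (n : ℕ) (a : ℕ → ℝ) :
    (Matrix.of fun i j : Fin n => a (max (i : ℕ) (j : ℕ))) =
      cornerU n * Matrix.diagonal (fun k : Fin n => cornerDiff n a k) * (cornerU n)ᵀ := by
  ext i j
  rw [Matrix.mul_apply]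
  simp only [Matrix.mul_diagonal, Matrix.transpose_apply, cornerU,
    Matrix.of_apply]
  rw [← sum_ite_cornerDiff n a (max (i : ℕ) j) (max_lt i.2 j.2)]
  refine Finset.sum_congr rfl fun k _ => ?_
  simp only [max_le_iff, Fin.val_fin_le]
  by_cases h1 : i ≤ k <;> by_cases h2 : j ≤ k <;> simp [h1, h2]

lemma cornerU_det (n : ℕ) : (cornerU n).det = 1 := by
  rw [Matrix.det_of_isUpperTriangular]
  · simp [cornerU]
  · intro i j hij
    simpa [cornerU] using hij

/-- **Quadratic form of the inverse corner matrix.** For reals `a₀, …, a_{n−1}` with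
`aᵢ ≠ a_{i+1}` and `a_{n−1} ≠ 0`, and any row vector `X`,
`X · C(a₀, …, a_{n−1})⁻¹ · Xᵀ = Σ_{i<n-1} (Xᵢ − X_{i+1})²/(aᵢ − a_{i+1}) + X_{n−1}²/a_{n−1}`. -/
theorem corner_matrix_quadratic_form (n : ℕ) (hn : 2 ≤ n) (a X : ℕ → ℝ)
    (ha : ∀ i < n - 1, a i ≠ a (i + 1)) (ha' : a (n - 1) ≠ 0) :
    let C : Matrix (Fin n) (Fin n) ℝ := Matrix.of fun i j => a (max (i : ℕ) (j : ℕ))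
    (fun i : Fin n => X (i : ℕ)) ⬝ᵥ (C⁻¹ *ᵥ fun i : Fin n => X (i : ℕ)) =
      (∑ i ∈ Finset.range (n - 1), (X i - X (i + 1)) ^ 2 / (a i - a (i + 1))) +
        X (n - 1) ^ 2 / a (n - 1) := by
  intro C
  set e : Fin n → ℝ := fun k => cornerDiff n a k with he
  set δ : Fin n → ℝ := fun k => cornerDiff n X k with hδ
  have hdiff : ∀ (f : ℕ → ℝ), ∀ k < n - 1, cornerDiff n f k = f k - f (k + 1) := by
    intro f k hk
    have h1 : k < n := by omega
    have h2 : k + 1 < n := by omega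
    simp [cornerDiff, cornerTrunc, h1, h2]
  have hlast : ∀ f : ℕ → ℝ, cornerDiff n f (n - 1) = f (n - 1) := by
    intro f
    have h1 : n - 1 < n := by omega
    have h2 : ¬ n - 1 + 1 < n := by omega
    simp only [cornerDiff, cornerTrunc, if_pos h1, if_neg h2, sub_zero]
  have he0 : ∀ k, e k ≠ 0 := by
    intro k
    rcases Nat.lt_or_ge (k : ℕ) (n - 1) with hk | hk
    · simpa only [he, hdiff a k hk] using sub_ne_zero.2 (ha k hk)
    · have hk' : (k : ℕ) = n - 1 := by omega
      simpa only [he, hk', hlast a] using ha'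
  have hC : C = cornerU n * Matrix.diagonal e * (cornerU n)ᵀ := corner_factorization n a
  have hX : (fun i : Fin n => X i) = cornerU n *ᵥ δ := (cornerU_mulVec n X).symm
  have hCu : IsUnit C.det := by
    rw [hC, Matrix.det_mul, Matrix.det_mul, Matrix.det_transpose, cornerU_det,
      Matrix.det_diagonal, one_mul, mul_one]
    exact (Finset.prod_ne_zero_iff.2 fun k _ => he0 k).isUnit
  have hUu : IsUnit ((cornerU n)ᵀ).det := by
    rw [Matrix.det_transpose, cornerU_det]
    exact isUnit_one
  -- `y` is the solution of `C *ᵥ y = X`, read off from the factorization of `C`.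
  set y : Fin n → ℝ := ((cornerU n)ᵀ)⁻¹ *ᵥ (fun k => δ k / e k) with hy
  have hUy : (cornerU n)ᵀ *ᵥ y = fun k => δ k / e k := by
    rw [hy, Matrix.mulVec_mulVec, Matrix.mul_nonsing_inv _ hUu, Matrix.one_mulVec]
  have hCy : C *ᵥ y = fun i : Fin n => X i := by
    rw [hC, ← Matrix.mulVec_mulVec, hUy, ← Matrix.mulVec_mulVec, hX]
    congr 1
    ext k
    rw [Matrix.mulVec_diagonal, mul_div_cancel₀ _ (he0 k)]
  have hinv : (C⁻¹ *ᵥ fun i : Fin n => X i) = y := by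
    rw [← hCy, Matrix.mulVec_mulVec, Matrix.nonsing_inv_mul _ hCu, Matrix.one_mulVec]
  rw [hinv, hX, dotProduct_comm, Matrix.dotProduct_mulVec, ← Matrix.mulVec_transpose, hUy]
  simp only [dotProduct, he, hδ]
  rw [Fin.sum_univ_eq_sum_range
    (fun k => cornerDiff n X k / cornerDiff n a k * cornerDiff n X k) n]
  have hn1 : n = (n - 1) + 1 := by omega
  have hsplit : ∀ g : ℕ → ℝ,
      ∑ k ∈ Finset.range n, g k = ∑ k ∈ Finset.range (n - 1), g k + g (n - 1) := by
    intro g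
    rw [← Finset.sum_range_succ, ← hn1]
  rw [hsplit, hlast, hlast]
  congr 1
  · refine Finset.sum_congr rfl fun k hk => ?_
    rw [hdiff X k (Finset.mem_range.1 hk), hdiff a k (Finset.mem_range.1 hk)]
    ring
  · ring
end

section
/- Let d ≥ 1 and let L : {0, 1, …, d+1} → ℝ be strictly increasing with L(0) = −1 and L(1) = 0. Let y₀, y₁, …, y_{d+1} be vectors in the Lorentzian space 𝕃^{d+1,1} = ℝ^{d+2} whose Gram matrix is the corner matrix of (−L(0), −L(1), …, −L(d+1)), i.e., ⟨yᵢ, yⱼ⟩ = −L(max(i,j)) for all i, j. Then, writing κᵢ = κ(yᵢ), one has κ_{d+1}² = L(d+1) · Σ_{i=0}^{d} (κᵢ − κ_{i+1})²/(L(i+1) − L(i)). -/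
/-!
The successive differences `yᵢ - yᵢ₊₁` (`0 ≤ i ≤ d`), completed by `y_{d+1}` itself, are pairwise
orthogonal for the Lorentzian product when the Gram matrix is a corner matrix: their squares are
`L (i+1) - L i` and `-L (d+1)`, all nonzero. They therefore form an orthogonal basis, in which
the vector `x_N` representing (up to sign) the linear form `κ` expands. As `x_N` is
lightlike, Parseval's identity reads
`0 = ∑ i ≤ d, (κᵢ - κᵢ₊₁)² / (L (i+1) - L i) - κ_{d+1}² / L (d+1)`, which is the claim.

Parseval's identity is obtained with matrices (`sum_curv_sq_div_eq_zero`): if `V J Vᵀ = D`, then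
`J Vᵀ D⁻¹` is a right inverse of `V`, hence a left inverse, so `Vᵀ D⁻¹ V = J⁻¹ = J`.
-/

open Finset Matrix

/-- Diagonal entries of the Lorentzian form. -/
noncomputable def lsign (n : ℕ) (i : Fin n) : ℝ := if (i : ℕ) + 1 = n then -1 else 1

lemma lsign_mul_self (n : ℕ) (i : Fin n) : lsign n i * lsign n i = 1 := by
  unfold lsign; split_ifs <;> norm_num

lemma lprod_sub_left {n : ℕ} (x y z : Fin n → ℝ) :
    lprod (x - y) z = lprod x z - lprod y z := by
  simp only [lprod, Pi.sub_apply, ← Finset.sum_sub_distrib]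
  exact Finset.sum_congr rfl fun i _ => by ring

lemma lprod_sub_right {n : ℕ} (x y z : Fin n → ℝ) :
    lprod z (x - y) = lprod z x - lprod z y := by
  simp only [lprod, Pi.sub_apply, ← Finset.sum_sub_distrib]
  exact Finset.sum_congr rfl fun i _ => by ring

/-- Coordinates of the linear form `curv` in the standard dual basis. -/
noncomputable def curvVec (d : ℕ) : Fin (d + 2) → ℝ :=
  Pi.single ⟨d + 1, by omega⟩ 1 - Pi.single ⟨d, by omega⟩ 1

lemma dotProduct_curvVec {d : ℕ} (x : Fin (d + 2) → ℝ) : x ⬝ᵥ curvVec d = curv x := by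
  simp [curvVec, curv, dotProduct_sub]

/-- The form `curv` is isotropic for the dual Lorentzian form. -/
lemma curvVec_isotropic (d : ℕ) :
    curvVec d ⬝ᵥ (diagonal (lsign (d + 2)) *ᵥ curvVec d) = 0 := by
  rw [dotProduct_comm, dotProduct_curvVec]
  simp [curv, mulVec_diagonal, curvVec, lsign]

/-- Parseval's identity for the lightlike form `curv` in an orthogonal basis. -/
lemma sum_curv_sq_div_eq_zero {d : ℕ} (v : Fin (d + 2) → Fin (d + 2) → ℝ) (D : Fin (d + 2) → ℝ)
    (hD : ∀ i, D i ≠ 0) (hv : ∀ i j, lprod (v i) (v j) = if i = j then D i else 0) :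
    ∑ i, curv (v i) ^ 2 / D i = 0 := by
  set V : Matrix (Fin (d + 2)) (Fin (d + 2)) ℝ := Matrix.of v with hV
  set J : Matrix (Fin (d + 2)) (Fin (d + 2)) ℝ := diagonal (lsign (d + 2)) with hJ
  have hJJ : J * J = 1 := by
    rw [hJ, diagonal_mul_diagonal]
    simp [lsign_mul_self]
  have hDD : diagonal D * diagonal (fun i => (D i)⁻¹) = 1 := by
    rw [diagonal_mul_diagonal]
    simp [hD]
  have hG : V * J * Vᵀ = diagonal D := by
    ext i j
    rw [diagonal_apply, ← hv, Matrix.mul_apply, lprod]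
    refine Finset.sum_congr rfl fun k _ => ?_
    simp only [hJ, mul_diagonal, transpose_apply, hV, of_apply, lsign]
    ring
  have h1 : V * (J * Vᵀ * diagonal (fun i => (D i)⁻¹)) = 1 := by
    rw [← hDD, ← hG]; simp only [Matrix.mul_assoc]
  have h2 := mul_eq_one_comm.mp h1
  have h3 : Vᵀ * diagonal (fun i => (D i)⁻¹) * V = J := by
    calc _ = J * J * (Vᵀ * diagonal (fun i => (D i)⁻¹) * V) := by rw [hJJ, Matrix.one_mul]
      _ = J * (J * Vᵀ * diagonal (fun i => (D i)⁻¹) * V) := by simp only [Matrix.mul_assoc]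
      _ = J := by rw [h2, Matrix.mul_one]
  have h4 := curvVec_isotropic d
  rw [← hJ, ← h3, ← mulVec_mulVec, ← mulVec_mulVec, dotProduct_mulVec, vecMul_transpose] at h4
  rw [← h4, dotProduct]
  refine Finset.sum_congr rfl fun i _ => ?_
  have h5 : (V *ᵥ curvVec d) i = curv (v i) := dotProduct_curvVec (v i)
  rw [mulVec_diagonal, h5]
  ring

/-- Successive differences of a family whose Gram matrix is a corner matrix are orthogonal. -/
lemma lprod_sub_succ {n m : ℕ} (L : ℕ → ℝ) (y : ℕ → Fin n → ℝ)
    (h : ∀ i ≤ m, ∀ j ≤ m, lprod (y i) (y j) = -L (max i j)) (i j : ℕ) (hi : i < m) (hj : j < m) :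
    lprod (y i - y (i + 1)) (y j - y (j + 1)) = if i = j then L (i + 1) - L i else 0 := by
  rw [lprod_sub_left, lprod_sub_right, lprod_sub_right, h i (by omega) j (by omega),
    h i (by omega) (j + 1) (by omega), h (i + 1) (by omega) j (by omega),
    h (i + 1) (by omega) (j + 1) (by omega)]
  rcases lt_trichotomy i j with hij | rfl | hij
  · rw [max_eq_right (by omega), max_eq_right (by omega), max_eq_right (by omega),
      max_eq_right (by omega), if_neg (by omega)]
    ring
  · simp only [max_self, le_add_iff_nonneg_right, zero_le, max_eq_right, max_eq_left, if_true]
    ring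
  · rw [max_eq_left (by omega), max_eq_left (by omega), max_eq_left (by omega),
      max_eq_left (by omega), if_neg (by omega)]
    ring

/-- **Polytopal Descartes theorem for regular polytopes.** If `L : {0,…,d+1} → ℝ` is
strictly increasing with `L 0 = −1`, `L 1 = 0`, and `y₀, …, y_{d+1}` are vectors of
`𝕃^{d+1,1}` whose Gramian is the corner matrix of `(−L 0, …, −L (d+1))`, then their
curvatures satisfy
`κ_{d+1}² = L(d+1) · Σ_{i=0}^{d} (κᵢ − κ_{i+1})²/(L(i+1) − L(i))`. -/
theorem polytopal_descartes_theorem (d : ℕ) (hd : 1 ≤ d) (L : ℕ → ℝ)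
    (hL0 : L 0 = -1) (hL1 : L 1 = 0)
    (hmono : ∀ i ≤ d, L i < L (i + 1))
    (y : ℕ → (Fin (d + 2) → ℝ))
    (hgram : ∀ i ≤ d + 1, ∀ j ≤ d + 1, lprod (y i) (y j) = -L (max i j)) :
    (curv (y (d + 1))) ^ 2 =
      L (d + 1) * ∑ i ∈ Finset.range (d + 1),
        (curv (y i) - curv (y (i + 1))) ^ 2 / (L (i + 1) - L i) := by
  have hpos : ∀ k, k + 1 ≤ d → 0 < L (k + 2) := by
    intro k
    induction k with
    | zero => intro hk; simpa [hL1] using hmono 1 hk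
    | succ k ih => intro hk; exact (ih (by omega)).trans (hmono (k + 2) hk)
  have hLd : 0 < L (d + 1) := by
    obtain ⟨k, rfl⟩ : ∃ k, d = k + 1 := ⟨d - 1, by omega⟩
    exact hpos k le_rfl
  -- Extending by `y_{d+2} = 0` and `L (d+2) = 0` keeps the corner shape of the Gram matrix and
  -- makes the last basis vector `y_{d+1}` a successive difference like the others.
  set M : ℕ → ℝ := fun i => if i ≤ d + 1 then L i else 0 with hM
  set z : ℕ → Fin (d + 2) → ℝ := fun i => if i ≤ d + 1 then y i else 0 with hz
  have hgz : ∀ i ≤ d + 2, ∀ j ≤ d + 2, lprod (z i) (z j) = -M (max i j) := by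
    intro i _ j _
    by_cases h1 : i ≤ d + 1
    · by_cases h2 : j ≤ d + 1
      · simpa [hM, hz, h1, h2] using hgram i h1 j h2
      · simp [hM, hz, h2, lprod]
    · simp [hM, hz, h1, lprod]
  have key := sum_curv_sq_div_eq_zero (d := d) (fun i => z i - z (i + 1))
    (fun i => M (i + 1) - M i) ?_ ?_
  · rw [Fin.sum_univ_eq_sum_range
      (fun i => curv (z i - z (i + 1)) ^ 2 / (M (i + 1) - M i)), Finset.sum_range_succ] at key
    have hs : ∑ i ∈ Finset.range (d + 1), curv (z i - z (i + 1)) ^ 2 / (M (i + 1) - M i) =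
        ∑ i ∈ Finset.range (d + 1),
          (curv (y i) - curv (y (i + 1))) ^ 2 / (L (i + 1) - L i) := by
      refine Finset.sum_congr rfl fun i hi => ?_
      have hi' := Finset.mem_range.mp hi
      have e1 : i ≤ d + 1 := by omega
      have e2 : i ≤ d := by omega
      simp only [hM, hz, e1, e2, add_le_add_iff_right, if_true, curv, Pi.sub_apply]
      ring
    have ht : curv (z (d + 1) - z (d + 1 + 1)) ^ 2 / (M (d + 1 + 1) - M (d + 1)) =
        -(curv (y (d + 1)) ^ 2 / L (d + 1)) := by
      simp [hM, hz, div_neg]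
    rw [hs, ht, ← sub_eq_add_neg, sub_eq_zero] at key
    rw [key]
    field_simp
  · intro i
    by_cases h : (i : ℕ) ≤ d
    · have := hmono i h
      have e1 : (i : ℕ) ≤ d + 1 := by omega
      simpa [hM, h, e1, sub_eq_zero] using this.ne'
    · have e : (i : ℕ) = d + 1 := by omega
      simp [hM, e, hLd.ne']
  · intro i j
    simpa [Fin.ext_iff] using lprod_sub_succ M z hgz i j i.2 j.2
end

section
/- Let d ≥ 1 and n ≥ 1, and let x₁, …, xₙ and x′₁, …, x′ₙ be vectors in ℝ^{d+2} such that: (i) ⟨xᵢ, xᵢ⟩ = 1 for all i; (ii) ⟨xᵢ, xⱼ⟩ ≤ −1 for all i ≠ j; (iii) every xᵢ and every x′ᵢ has positive last coordinate (is future-directed); and (iv) the family (x₁, …, xₙ) spans ℝ^{d+2}. Then ⟨xᵢ, xⱼ⟩ = ⟨x′ᵢ, x′ⱼ⟩ for all i, j if and only if there exists a matrix M ∈ GL_{d+2}(ℝ) with MᵀQM = Q and e_{d+2}ᵀ M e_{d+2} > 0 (an orthochronous Lorentz transformation) such that M xᵢ = x′ᵢ for all i, where Q = diag(1, …, 1,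 −1). -/
/-!
Write `X`, `X'` for the matrices with columns `x i`, `x' i`. Since the `x i` span, `X` has a right
inverse `C`, and the only candidate for the transformation is `M = X' * C`. If the Gramians
`Xᵀ * Q * X` and `X'ᵀ * Q * X'` agree, then `Mᵀ * Q * M = Q`, and nondegeneracy of `Q` upgrades this
to `M * X = X'` (`exists_lorentz_of_gram_eq`). The time orientation comes from `x i + x j` with
`i ≠ j`: as `lprod (x i) (x j) ≤ -1`, it is a future-directed causal vector, and its image
`x' i + x' j` is future-directed too, whereas a Lorentz matrix with nonpositive last diagonal entry
would send it to the past (`last_pos_of_future`, a Cauchy–Schwarz estimate on the last row of `M`).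
-/

open Finset Matrix

/-- The matrix `Q = diag(1, …, 1, −1)` of the Lorentzian form. -/
noncomputable def lorentzQ (n : ℕ) : Matrix (Fin n) (Fin n) ℝ :=
  Matrix.diagonal fun i => if (i : ℕ) + 1 = n then -1 else 1

theorem lprod_eq_dotProduct {n : ℕ} (x y : Fin n → ℝ) :
    lprod x y = x ⬝ᵥ (lorentzQ n *ᵥ y) := by
  simp only [lprod, lorentzQ, dotProduct, mulVec_diagonal]
  exact Finset.sum_congr rfl fun i _ => by ring

theorem lorentzQ_mul_self (n : ℕ) : lorentzQ n * lorentzQ n = 1 := by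
  rw [lorentzQ, diagonal_mul_diagonal, ← diagonal_one]
  congr 1
  ext i
  split_ifs <;> norm_num

theorem lprod_eq_sum_sub {m : ℕ} (x y : Fin (m + 1) → ℝ) :
    lprod x y = ∑ i : Fin m, x i.castSucc * y i.castSucc - x (Fin.last m) * y (Fin.last m) := by
  have h : ∀ i : Fin m, (i : ℕ) ≠ m := fun i => i.2.ne
  simp [lprod, Fin.sum_univ_castSucc, h, sub_eq_add_neg]

theorem lprod_mulVec {n : ℕ} {M : Matrix (Fin n) (Fin n) ℝ}
    (hM : Mᵀ * lorentzQ n * M = lorentzQ n) (x y : Fin n → ℝ) :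
    lprod (M *ᵥ x) (M *ᵥ y) = lprod x y := by
  rw [lprod_eq_dotProduct, lprod_eq_dotProduct, ← vecMul_transpose M x, ← dotProduct_mulVec,
    mulVec_mulVec, mulVec_mulVec, hM]

theorem lorentz_left_inverse {n : ℕ} {M : Matrix (Fin n) (Fin n) ℝ}
    (hM : Mᵀ * lorentzQ n * M = lorentzQ n) : lorentzQ n * Mᵀ * lorentzQ n * M = 1 := by
  rw [Matrix.mul_assoc (lorentzQ n), Matrix.mul_assoc (lorentzQ n), hM, lorentzQ_mul_self]

theorem lorentz_transpose {n : ℕ} {M : Matrix (Fin n) (Fin n) ℝ}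
    (hM : Mᵀ * lorentzQ n * M = lorentzQ n) : M * lorentzQ n * Mᵀ = lorentzQ n := by
  have h := mul_eq_one_comm.mp (lorentz_left_inverse hM)
  calc M * lorentzQ n * Mᵀ = M * (lorentzQ n * Mᵀ * lorentzQ n) * lorentzQ n := by
        simp only [Matrix.mul_assoc, lorentzQ_mul_self, Matrix.mul_one]
    _ = lorentzQ n := by rw [h, Matrix.one_mul]

/-- The last row of a Lorentz matrix is a unit timelike vector, because `Mᵀ` is Lorentz too. -/
theorem lprod_last_row {m : ℕ} {M : Matrix (Fin (m + 1)) (Fin (m + 1)) ℝ}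
    (hM : Mᵀ * lorentzQ (m + 1) * M = lorentzQ (m + 1)) :
    lprod (M (Fin.last m)) (M (Fin.last m)) = -1 := by
  have h := congrFun (congrFun (lorentz_transpose hM) (Fin.last m)) (Fin.last m)
  rw [Matrix.mul_assoc] at h
  rw [lprod_eq_dotProduct]
  refine Eq.trans h ?_
  simp [lorentzQ]

/-- A Lorentz matrix that keeps a single future-directed causal vector future-directed is
orthochronous. -/
theorem last_pos_of_future {m : ℕ} {M : Matrix (Fin (m + 1)) (Fin (m + 1)) ℝ}
    (hM : Mᵀ * lorentzQ (m + 1) * M = lorentzQ (m + 1)) {u : Fin (m + 1) → ℝ}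
    (hu : lprod u u ≤ 0) (hpos : 0 < u (Fin.last m)) (hMu : 0 < (M *ᵥ u) (Fin.last m)) :
    0 < M (Fin.last m) (Fin.last m) := by
  have hr := lprod_last_row hM
  have hcs := Finset.sum_mul_sq_le_sq_mul_sq Finset.univ
    (fun i : Fin m => M (Fin.last m) i.castSucc) (fun i : Fin m => u i.castSucc)
  rw [lprod_eq_sum_sub] at hr hu
  simp only [mulVec, dotProduct, Fin.sum_univ_castSucc] at hMu
  simp only [← pow_two] at hr hu
  set a := M (Fin.last m) (Fin.last m)
  set t := u (Fin.last m)
  set R := ∑ i : Fin m, M (Fin.last m) i.castSucc ^ 2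
  set U := ∑ i : Fin m, u i.castSucc ^ 2
  set p := ∑ i : Fin m, M (Fin.last m) i.castSucc * u i.castSucc
  by_contra! ha
  have hR : 0 ≤ R := Finset.sum_nonneg fun i _ => sq_nonneg _
  have hRU : R * U ≤ R * t ^ 2 := mul_le_mul_of_nonneg_left (by linarith) hR
  -- Cauchy–Schwarz bounds the spatial part `p` strictly by the temporal part: `p² < (a t)²`.
  have hlt : p ^ 2 < (a * t) ^ 2 := by
    have hR' : R = a ^ 2 - 1 := by linarith
    rw [hR'] at hRU hcs
    nlinarith [pow_pos hpos 2]
  have hat : a * t ≤ 0 := mul_nonpos_of_nonpos_of_nonneg ha hpos.le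
  nlinarith

/-- A spanning family and a family with the same Gramian differ by a Lorentz matrix. -/
theorem exists_lorentz_of_gram_eq {m n : ℕ} (x x' : Fin n → (Fin m → ℝ))
    (hspan : Submodule.span ℝ (Set.range x) = ⊤)
    (h : ∀ i j, lprod (x i) (x j) = lprod (x' i) (x' j)) :
    ∃ M : Matrix (Fin m) (Fin m) ℝ, Mᵀ * lorentzQ m * M = lorentzQ m ∧ ∀ i, M *ᵥ x i = x' i := by
  set X : Matrix (Fin m) (Fin n) ℝ := (Matrix.of x)ᵀ with hX
  set X' : Matrix (Fin m) (Fin n) ℝ := (Matrix.of x')ᵀ with hX'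
  have hG : X'ᵀ * lorentzQ m * X' = Xᵀ * lorentzQ m * X := by
    ext i j
    have := h i j
    rw [lprod_eq_dotProduct, lprod_eq_dotProduct] at this
    rw [Matrix.mul_assoc, Matrix.mul_assoc]
    exact this.symm
  obtain ⟨C, hC⟩ : ∃ C : Matrix (Fin n) (Fin m) ℝ, X * C = 1 := by
    rw [← mulVec_surjective_iff_exists_right_inverse]
    have : LinearMap.range X.mulVecLin = ⊤ := by
      rw [range_mulVecLin]; exact hspan
    exact LinearMap.range_eq_top.mp this
  have hM : (X' * C)ᵀ * lorentzQ m * (X' * C) = lorentzQ m := by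
    calc (X' * C)ᵀ * lorentzQ m * (X' * C) = Cᵀ * (X'ᵀ * lorentzQ m * X') * C := by
          simp only [transpose_mul, Matrix.mul_assoc]
      _ = (X * C)ᵀ * lorentzQ m * (X * C) := by
          rw [hG]; simp only [transpose_mul, Matrix.mul_assoc]
      _ = lorentzQ m := by rw [hC]; simp
  -- `M * X` and `X'` have the same products with every column of `M`, and these form a basis.
  have hMX : X' * C * X = X' := by
    have key : (X' * C)ᵀ * lorentzQ m * (X' * C * X) = (X' * C)ᵀ * lorentzQ m * X' := by
      calc (X' * C)ᵀ * lorentzQ m * (X' * C * X) = lorentzQ m * X := by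
            rw [← Matrix.mul_assoc, hM]
        _ = (X * C)ᵀ * lorentzQ m * X := by rw [hC]; simp
        _ = Cᵀ * (X'ᵀ * lorentzQ m * X') := by
            rw [hG]; simp only [transpose_mul, Matrix.mul_assoc]
        _ = (X' * C)ᵀ * lorentzQ m * X' := by simp only [transpose_mul, Matrix.mul_assoc]
    have hinv : X' * C * lorentzQ m * ((X' * C)ᵀ * lorentzQ m) = 1 := by
      rw [← Matrix.mul_assoc, lorentz_transpose hM, lorentzQ_mul_self]
    calc X' * C * X = X' * C * lorentzQ m * ((X' * C)ᵀ * lorentzQ m) * (X' * C * X) := by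
          rw [hinv, Matrix.one_mul]
      _ = X' * C * lorentzQ m * ((X' * C)ᵀ * lorentzQ m) * X' := by
          rw [Matrix.mul_assoc _ _ (X' * C * X), key, ← Matrix.mul_assoc]
      _ = X' := by rw [hinv, Matrix.one_mul]
  refine ⟨X' * C, hM, fun i => ?_⟩
  ext k
  exact congrFun (congrFun hMX k) i

/-- **Möbius equivalence criterion for maximal-rank ball packings.** Two families of
future-directed normalized Lorentzian vectors of ball packings, the first one spanning
`ℝ^{d+2}`, have the same Gramian if and only if one is obtained from the other by an
orthochronous Lorentz transformation. -/
theorem gram_iff_orthochronous_lorentz (d n : ℕ) (hd : 1 ≤ d) (hn : 1 ≤ n)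
    (x x' : Fin n → (Fin (d + 2) → ℝ))
    (hnorm : ∀ i, lprod (x i) (x i) = 1)
    (hdisj : ∀ i j, i ≠ j → lprod (x i) (x j) ≤ -1)
    (hfut : ∀ i, 0 < x i (Fin.last (d + 1)))
    (hfut' : ∀ i, 0 < x' i (Fin.last (d + 1)))
    (hspan : Submodule.span ℝ (Set.range x) = ⊤) :
    (∀ i j, lprod (x i) (x j) = lprod (x' i) (x' j)) ↔
      ∃ M : Matrix (Fin (d + 2)) (Fin (d + 2)) ℝ, IsUnit M.det ∧
        Mᵀ * lorentzQ (d + 2) * M = lorentzQ (d + 2) ∧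
        0 < M (Fin.last (d + 1)) (Fin.last (d + 1)) ∧
        ∀ i, M *ᵥ x i = x' i := by
  constructor
  · intro h
    obtain ⟨M, hM, hMx⟩ := exists_lorentz_of_gram_eq x x' hspan h
    refine ⟨M, ?_, hM, ?_, hMx⟩
    · exact (isUnit_iff_isUnit_det M).mp (IsUnit.of_mul_eq_one_right _ (lorentz_left_inverse hM))
    -- A spanning family of `ℝ^(d+2)` has at least two members.
    have hcard : d + 2 ≤ n := by
      have := finrank_range_le_card (R := ℝ) x
      rw [Set.finrank, hspan, finrank_top] at this
      simpa using this
    let i : Fin n := ⟨0, by omega⟩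
    let j : Fin n := ⟨1, by omega⟩
    have hij : i ≠ j := by simp [i, j]
    refine last_pos_of_future hM (u := x i + x j) ?_ (add_pos (hfut i) (hfut j)) ?_
    · have hexp : lprod (x i + x j) (x i + x j) =
          lprod (x i) (x i) + 2 * lprod (x i) (x j) + lprod (x j) (x j) := by
        simp only [lprod, Finset.mul_sum, ← Finset.sum_add_distrib, Pi.add_apply]
        exact Finset.sum_congr rfl fun k _ => by ring
      linarith [hnorm i, hnorm j, hdisj i j hij]
    · rw [mulVec_add, hMx, hMx]
      exact add_pos (hfut' i) (hfut' j)
  · rintro ⟨M, -, hM, -, hMx⟩ i j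
    rw [← hMx i, ← hMx j, lprod_mulVec hM]
end

section
/- Let λ > 0 and let F_λ and S be the real 4×4 matrices F_λ = [[−1, 0, 2√λ, −2√λ], [0, 1, 0, 0], [2√λ, 0, 1 − 2λ, 2λ], [2√λ, 0, −2λ, 2λ + 1]] and S = diag(−1, 1, 1, 1). Then for every natural number n, (F_λ·S)ⁿ = [[1, 0, 2√λ·n, −2√λ·n], [0, 1, 0, 0], [−2√λ·n, 0, 1 − 2λn², 2λn²], [−2√λ·n, 0, −2λn², 1 + 2λn²]]. -/
/-!
The product `F * S` is the unipotent matrix given by the formula at `n = 1`. Multiplying the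
formula for `k` by this matrix gives the formula for `k + 1`: the first row and column add, and in
the lower right block the cross term `(2√λ k)(2√λ) = 4 λ k` completes `2 λ k² + 2 λ` to
`2 λ (k + 1)²`. The only place where `λ > 0` enters is `√λ * √λ = λ`.
-/

open Matrix Real

/-- **Powers of the product of two reflections.** For `λ > 0`, the matrices `F_λ` and `S`
of the reflections `r_f` and `s_f` satisfy the explicit power formula for `(F_λ S)ⁿ`. -/
theorem reflection_product_pow (lam : ℝ) (hlam : 0 < lam) (n : ℕ) :
    let F : Matrix (Fin 4) (Fin 4) ℝ :=
      !![-1, 0, 2 * sqrt lam, -2 * sqrt lam;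
         0, 1, 0, 0;
         2 * sqrt lam, 0, 1 - 2 * lam, 2 * lam;
         2 * sqrt lam, 0, -2 * lam, 2 * lam + 1]
    let S : Matrix (Fin 4) (Fin 4) ℝ :=
      !![-1, 0, 0, 0;
         0, 1, 0, 0;
         0, 0, 1, 0;
         0, 0, 0, 1]
    (F * S) ^ n =
      !![1, 0, 2 * sqrt lam * n, -2 * sqrt lam * n;
         0, 1, 0, 0;
         -2 * sqrt lam * n, 0, 1 - 2 * lam * n ^ 2, 2 * lam * n ^ 2;
         -2 * sqrt lam * n, 0, -2 * lam * n ^ 2, 1 + 2 * lam * n ^ 2] := by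
  intro F S
  have hs : sqrt lam * sqrt lam = lam := Real.mul_self_sqrt hlam.le
  -- Right multiplication by `S` negates the first column.
  have hFS : F * S =
      !![1, 0, 2 * sqrt lam, -2 * sqrt lam;
         0, 1, 0, 0;
         -2 * sqrt lam, 0, 1 - 2 * lam, 2 * lam;
         -2 * sqrt lam, 0, -2 * lam, 2 * lam + 1] := by
    ext i j
    fin_cases i <;> fin_cases j <;> simp [F, S, Matrix.mul_apply, Fin.sum_univ_four]
  rw [hFS]
  clear_value F S
  induction n with
  | zero =>
    ext i j
    fin_cases i <;> fin_cases j <;> simp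
  | succ k ih =>
    rw [pow_succ, ih]
    -- Every entry is a polynomial identity modulo the relation `hs`.
    ext i j
    fin_cases i <;> fin_cases j <;>
      simp [Matrix.mul_apply, Fin.sum_univ_four] <;> grind
end

section
/- Let p ∈ {3, 4, 5} and λ = 4cos²(π/p). Define the 4×4 real matrices S = diag(−1,1,1,1), F_λ = [[−1, 0, 2√λ, −2√λ], [0, 1, 0, 0], [2√λ, 0, 1 − 2λ, 2λ], [2√λ, 0, −2λ, 2λ + 1]], E_λ = [[1, 0, 0, 0], [0, 1 − λ/2, (λ² − 4λ − 1)/4, −(λ² − 4λ + 1)/4], [0, (λ² − 4λ − 1)/4, 1 − (λ² − 4λ − 1)²/(8λ), −(1 − (λ − 4)²λ²)/(8λ)], [0, (λ² − 4λ + 1)/4, (1 − (λ − 4)²λ²)/(8λ), 1 + (λ² − 4λ + 1)²/(8λ)]], the column vector B_λ = (0, 1, λ, λ)ᵀ, and the row vector K = (0, 0, −1, 1). Then for every natural number n: K · E_λ · (F_λ·S)ⁿ · E_λ · B_λ = n². -/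
/-!
Write `λ = s²`. The product `F S` is a parabolic element fixing the light-like vector
`u = (0, 0, 1, 1)`: `F S - 1` is nilpotent of order three, so the powers `(F S)ⁿ` are quadratic
polynomials in `n`, computed in `parabolic_pow`. On a vector `v` with first coordinate `0` they act
by `(F S)ⁿ v = v + 2 s n d e₁ - 2 λ n² d u`, where `d = v₃ - v₄`. For `v = E B` one has `d = -1`;
moreover `K E` has first coordinate `0`, `K E u = 1 / (2λ)`, and `K E E B = K B = 0` because `E` is
an involution. Hence the curvature is `n²`. This is valid for every `λ > 0`; the value
`λ = 4 cos² (π / p)` matters only through `cos (π / p) > 0`.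
-/

open Matrix Real

/-- The powers of the parabolic matrix `F S` (the case `n = 1`), with `s = √λ`. -/
lemma parabolic_pow (s : ℝ) (n : ℕ) :
    (!![1, 0, 2 * s, -2 * s;
        0, 1, 0, 0;
        -2 * s, 0, 1 - 2 * s ^ 2, 2 * s ^ 2;
        -2 * s, 0, -2 * s ^ 2, 2 * s ^ 2 + 1] : Matrix (Fin 4) (Fin 4) ℝ) ^ n =
      !![1, 0, 2 * s * n, -2 * s * n;
         0, 1, 0, 0;
         -2 * s * n, 0, 1 - 2 * s ^ 2 * n ^ 2, 2 * s ^ 2 * n ^ 2;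
         -2 * s * n, 0, -2 * s ^ 2 * n ^ 2, 2 * s ^ 2 * n ^ 2 + 1] := by
  induction n with
  | zero =>
    ext i j
    fin_cases i <;> fin_cases j <;> simp
  | succ k ih =>
    rw [pow_succ, ih]
    ext i j
    fin_cases i <;> fin_cases j <;> simp [Matrix.mul_apply, Fin.sum_univ_four] <;> ring

/-- **Perfect squares in Platonic Apollonian packings.** For `p ∈ {3,4,5}` and
`λ = 4cos²(π/p)`, the curvature of the disk `r_e (r_f s_f)ⁿ r_e (b_v)` equals `n²`:
`K · E_λ · (F_λ S)ⁿ · E_λ · B_λ = n²`. -/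
theorem perfect_squares_curvature (p : ℝ) (hp : p = 3 ∨ p = 4 ∨ p = 5) (n : ℕ) :
    let lam : ℝ := 4 * cos (π / p) ^ 2
    let B : Fin 4 → ℝ := ![0, 1, lam, lam]
    let E : Matrix (Fin 4) (Fin 4) ℝ :=
      !![1, 0, 0, 0;
         0, 1 - lam / 2, (lam ^ 2 - 4 * lam - 1) / 4, -(lam ^ 2 - 4 * lam + 1) / 4;
         0, (lam ^ 2 - 4 * lam - 1) / 4, 1 - (lam ^ 2 - 4 * lam - 1) ^ 2 / (8 * lam),
           -(1 - (lam - 4) ^ 2 * lam ^ 2) / (8 * lam);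
         0, (lam ^ 2 - 4 * lam + 1) / 4, (1 - (lam - 4) ^ 2 * lam ^ 2) / (8 * lam),
           1 + (lam ^ 2 - 4 * lam + 1) ^ 2 / (8 * lam)]
    let F : Matrix (Fin 4) (Fin 4) ℝ :=
      !![-1, 0, 2 * sqrt lam, -2 * sqrt lam;
         0, 1, 0, 0;
         2 * sqrt lam, 0, 1 - 2 * lam, 2 * lam;
         2 * sqrt lam, 0, -2 * lam, 2 * lam + 1]
    let S : Matrix (Fin 4) (Fin 4) ℝ :=
      !![-1, 0, 0, 0;
         0, 1, 0, 0;
         0, 0, 1, 0;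
         0, 0, 0, 1]
    let K : Fin 4 → ℝ := ![0, 0, -1, 1]
    K ⬝ᵥ ((E * (F * S) ^ n * E) *ᵥ B) = (n : ℝ) ^ 2 := by
  intro lam B E F S K
  have hcos : 0 < cos (π / p) := by
    have hp3 : 3 ≤ p := by rcases hp with rfl | rfl | rfl <;> norm_num
    have hp0 : 0 < p := by linarith
    apply cos_pos_of_mem_Ioo
    constructor
    · have := div_pos pi_pos hp0
      linarith [pi_pos]
    · rw [div_lt_div_iff₀ hp0 two_pos]
      nlinarith [pi_pos]
  have hlam : 0 < lam := by positivity
  have hne : lam ≠ 0 := hlam.ne'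
  have hsq : sqrt lam ^ 2 = lam := sq_sqrt hlam.le
  have hFS : F * S = !![1, 0, 2 * sqrt lam, -2 * sqrt lam;
        0, 1, 0, 0;
        -2 * sqrt lam, 0, 1 - 2 * sqrt lam ^ 2, 2 * sqrt lam ^ 2;
        -2 * sqrt lam, 0, -2 * sqrt lam ^ 2, 2 * sqrt lam ^ 2 + 1] := by
    rw [hsq]
    ext i j
    fin_cases i <;> fin_cases j <;> simp [F, S, Matrix.mul_apply, Fin.sum_univ_four]
  rw [hFS, parabolic_pow, hsq, ← Matrix.mulVec_mulVec, ← Matrix.mulVec_mulVec]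
  -- The polynomial identity below holds for any nonzero `lam`, so its trigonometric value is hidden.
  clear_value lam
  simp [K, E, B, Matrix.mulVec, dotProduct, Fin.sum_univ_four]
  field_simp
  ring
end

section
/- Let q ∈ {3, 4, 5} and define the 4×4 real matrices S = diag(−1,1,1,1); S* = [[1,0,0,0],[0,−1,−2,2],[0,−2,−1,2],[0,−2,−2,3]]; V = diag(1,−1,1,1); E = [[1,0,0,0],[0,1/2,1,−1/2],[0,1,−1,1],[0,1/2,−1,3/2]]; and F_q = [[−1, 0, 4cos(π/q), −4cos(π/q)], [0,1,0,0], [4cos(π/q), 0, 1 − 8cos²(π/q), 8cos²(π/q)], [4cos(π/q), 0, −8cos²(π/q), 1 + 8cos²(π/q)]]. Then: (a) each of S, S*, V, E, F_q satisfies MᵀQM = Q with Q = diag(1,1,1,−1) and has positive (4,4) entry, hence lies in O↑_{3,1}(ℝ); (b) each is an involution, M² = I₄; (c) (V·E)³ = I₄ and (E·F_q)^q = I₄; and (d) the six non-adjacent pairs commute: S*·E = E·S*, S*·F_q = F_q·S*, S*·S = S·S*, V·F_q = F_q·V, V·S = S·V, E·S = S·E. -/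
/-!
Each of the five matrices is the reflection `x ↦ x - 2 ⟨n, x⟩ n` in a unit spacelike vector `n` of
Minkowski space, so membership in the Lorentz group, involutivity and the commutation relations
(orthogonality of the normals) are entrywise identities, polynomial in `c = cos (π / q)`.

For the relation `(E F)^q = 1`, the normals of `E` and `F` have inner product `c`. Hence `A = E F` is
a rotation through `2π/q` in a plane and fixes the orthogonal complement, so it is annihilated by
`(X - 1) (X² - 2 cos (2π/q) X + 1)`. With `t = 4 c² - 1 = 1 + 2 cos (2π/q)` this reads
`A³ = t A² - t A + 1`, for every real `c`. The values `t = 0`, `t = 1` and `t² = t + 1`, for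
`q = 3, 4, 5` respectively, then give `A^q = 1` by division of polynomials.
-/

open Matrix Real

/-- The matrix `E`. -/
noncomputable def ssaE : Matrix (Fin 4) (Fin 4) ℝ :=
  !![1, 0, 0, 0;
     0, 1/2, 1, -1/2;
     0, 1, -1, 1;
     0, 1/2, -1, 3/2]

/-- The matrix `F_q`, with `cos (π / q)` replaced by an arbitrary real number `c`. -/
noncomputable def ssaF (c : ℝ) : Matrix (Fin 4) (Fin 4) ℝ :=
  !![-1, 0, 4 * c, -4 * c;
     0, 1, 0, 0;
     4 * c, 0, 1 - 8 * c ^ 2, 8 * c ^ 2;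
     4 * c, 0, -8 * c ^ 2, 1 + 8 * c ^ 2]

/-- The cubic relation for the product of two reflections whose unit normals have inner
product `c`. -/
lemma ssaEF_cubic (c : ℝ) :
    (ssaE * ssaF c) ^ 3 =
      (4 * c ^ 2 - 1) • (ssaE * ssaF c) ^ 2 - (4 * c ^ 2 - 1) • (ssaE * ssaF c) + 1 := by
  have hA : ssaE * ssaF c =
      !![-1, 0, 4 * c, -4 * c;
         2 * c, 1/2, 1 - 4 * c ^ 2, 4 * c ^ 2 - 1/2;
         0, 1, -1, 1;
         2 * c, 1/2, -1 - 4 * c ^ 2, 4 * c ^ 2 + 3/2] := by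
    ext i j
    fin_cases i <;> fin_cases j <;> simp [ssaE, ssaF, Matrix.mul_apply, Fin.sum_univ_four] <;> ring
  rw [hA, pow_succ, pow_two]
  ext i j
  fin_cases i <;> fin_cases j <;>
    simp [Matrix.mul_apply, Fin.sum_univ_four] <;> ring

lemma pow_four_eq_one_of_cubic {R : Type*} [Ring R] {A : R} (h : A ^ 3 = A ^ 2 - A + 1) : A ^ 4 = 1 := by
  have h4 : A ^ 4 = A ^ 3 * A := pow_succ A 3
  rw [h4, h, add_mul, sub_mul, ← pow_succ, h, one_mul, ← pow_two]
  abel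

lemma pow_five_eq_one_of_cubic {R : Type*} [Ring R] [Algebra ℝ R] {A : R} {t : ℝ}
    (h : A ^ 3 = t • A ^ 2 - t • A + 1) (ht : t ^ 2 = t + 1) :
    A ^ 5 = 1 := by
  have h4 : A ^ 4 = A ^ 2 - t • A + t • (1 : R) := by
    have : A ^ 4 = t • A ^ 3 - t • A ^ 2 + A := by
      rw [pow_succ A 3, h, add_mul, sub_mul, smul_mul_assoc, smul_mul_assoc, ← pow_succ, h,
        one_mul, ← pow_two]
    have ht' : t * t = t + 1 := by rw [← pow_two, ht]
    rw [this, h, smul_add, smul_sub, smul_smul, smul_smul, ht']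
    module
  rw [pow_succ A 4, h4, add_mul, sub_mul, smul_mul_assoc, smul_mul_assoc, ← pow_succ, h, one_mul,
    ← pow_two]
  abel

/-- The golden-ratio equation for `2 cos (π / 5)`. -/
lemma four_mul_cos_pi_div_five_sq : 4 * cos (π / 5) ^ 2 = 2 * cos (π / 5) + 1 := by
  have h5 : √5 ^ 2 = (5 : ℝ) := Real.sq_sqrt (by norm_num)
  rw [Real.cos_pi_div_five]
  linear_combination h5 / 4

lemma ssaEF_pow (q : ℕ) (hq : q = 3 ∨ q = 4 ∨ q = 5) :
    (ssaE * ssaF (cos (π / q))) ^ q = 1 := by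
  have h := ssaEF_cubic (cos (π / q))
  rcases hq with rfl | rfl | rfl
  · have ht : 4 * cos (π / (3 : ℕ)) ^ 2 - 1 = 0 := by
      push_cast
      rw [Real.cos_pi_div_three]
      norm_num
    rw [ht] at h
    simpa using h
  · have ht : 4 * cos (π / (4 : ℕ)) ^ 2 - 1 = 1 := by
      have h2 : √2 ^ 2 = (2 : ℝ) := Real.sq_sqrt (by norm_num)
      push_cast
      rw [Real.cos_pi_div_four]
      linear_combination h2
    rw [ht, one_smul, one_smul] at h
    exact pow_four_eq_one_of_cubic h
  · refine pow_five_eq_one_of_cubic h ?_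
    have hc := four_mul_cos_pi_div_five_sq
    push_cast
    -- Here `t = 4 c² - 1` equals `2 c`.
    rw [show 4 * cos (π / 5) ^ 2 - 1 = 2 * cos (π / 5) by linear_combination hc]
    linear_combination hc

set_option maxHeartbeats 2000000 in
/-- **Coxeter relations for the super symmetrized Apollonian group of `{3,q}`.**
The five generator matrices `S, S*, V, E, F_q` lie in the orthochronous Lorentz group
`O↑_{3,1}(ℝ)`, are involutions, satisfy `(VE)³ = I`, `(EF_q)^q = I`, and the six
non-adjacent pairs commute. -/
theorem ssa_coxeter_relations (q : ℕ) (hq : q = 3 ∨ q = 4 ∨ q = 5) :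
    let Q : Matrix (Fin 4) (Fin 4) ℝ := Matrix.diagonal ![1, 1, 1, -1]
    let S : Matrix (Fin 4) (Fin 4) ℝ := Matrix.diagonal ![-1, 1, 1, 1]
    let Sd : Matrix (Fin 4) (Fin 4) ℝ :=
      !![1, 0, 0, 0;
         0, -1, -2, 2;
         0, -2, -1, 2;
         0, -2, -2, 3]
    let V : Matrix (Fin 4) (Fin 4) ℝ := Matrix.diagonal ![1, -1, 1, 1]
    let E : Matrix (Fin 4) (Fin 4) ℝ :=
      !![1, 0, 0, 0;
         0, 1/2, 1, -1/2;
         0, 1, -1, 1;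
         0, 1/2, -1, 3/2]
    let F : Matrix (Fin 4) (Fin 4) ℝ :=
      !![-1, 0, 4 * cos (π / q), -4 * cos (π / q);
         0, 1, 0, 0;
         4 * cos (π / q), 0, 1 - 8 * cos (π / q) ^ 2, 8 * cos (π / q) ^ 2;
         4 * cos (π / q), 0, -8 * cos (π / q) ^ 2, 1 + 8 * cos (π / q) ^ 2]
    (∀ M ∈ [S, Sd, V, E, F], Mᵀ * Q * M = Q ∧ 0 < M 3 3) ∧
      (∀ M ∈ [S, Sd, V, E, F], M * M = 1) ∧
      (V * E) ^ 3 = 1 ∧ (E * F) ^ q = 1 ∧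
      Sd * E = E * Sd ∧ Sd * F = F * Sd ∧ Sd * S = S * Sd ∧
      V * F = F * V ∧ V * S = S * V ∧ E * S = S * E := by
  have hEF := ssaEF_pow q hq
  generalize cos (π / q) = c at hEF ⊢
  intro Q S Sd V E F
  refine ⟨?_, ?_, ?_, hEF, ?_, ?_, ?_, ?_, ?_, ?_⟩
  · intro M hM
    simp only [List.mem_cons, List.not_mem_nil, or_false] at hM
    rcases hM with rfl | rfl | rfl | rfl | rfl <;> refine ⟨?_, ?_⟩
    all_goals first
      | (ext i j
         fin_cases i <;> fin_cases j <;>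
          simp [Q, S, Sd, V, E, F, Matrix.mul_apply, Fin.sum_univ_four, Matrix.diagonal_apply] <;>
          ring)
      | (simp [S, Sd, V, E, F]; done)
      | (simp [F]; positivity)
  · intro M hM
    simp only [List.mem_cons, List.not_mem_nil, or_false] at hM
    rcases hM with rfl | rfl | rfl | rfl | rfl <;>
      (ext i j
       fin_cases i <;> fin_cases j <;>
        simp [S, Sd, V, E, F, Matrix.mul_apply, Fin.sum_univ_four, Matrix.diagonal_apply] <;> ring)
  · rw [pow_succ, pow_two]
    ext i j
    fin_cases i <;> fin_cases j <;>
      simp [V, E, Matrix.mul_apply, Fin.sum_univ_four, Matrix.diagonal_apply] <;> norm_num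
  all_goals
    ext i j
    fin_cases i <;> fin_cases j <;>
      simp [S, Sd, V, E, F, Matrix.mul_apply, Fin.sum_univ_four, Matrix.diagonal_apply] <;> ring
end

section
/- Let q ∈ {3, 4, 5} and let S = diag(−1,1,1,1), S* = [[1,0,0,0],[0,−1,−2,2],[0,−2,−1,2],[0,−2,−2,3]], V = diag(1,−1,1,1), and F_q = [[−1, 0, 4cos(π/q), −4cos(π/q)], [0,1,0,0], [4cos(π/q), 0, 1 − 8cos²(π/q), 8cos²(π/q)], [4cos(π/q), 0, −8cos²(π/q), 1 + 8cos²(π/q)]] be 4×4 real matrices. Then for every natural number n, the last diagonal entry of (S*·V)ⁿ equals 1 + 2n² and the last diagonal entry of (F_q·S)ⁿ equals 1 + 8cos²(π/q)·n². Consequently the matrices S*·V and F_q·S have infinite multiplicative order. -/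
open Matrix Real

/-!
Both products are unipotent: each has the form `1 + N` with `N ^ 3 = 0` (they are parabolic
isometries), so `(1 + N) ^ n = 1 + n N + (n (n - 1) / 2) N ^ 2` by the binomial theorem
(`one_add_pow_of_cube_eq_zero`), and the last diagonal entries of `N` and `N ^ 2` give the two
formulas. An entry that grows like `1 + c n ^ 2` with `c ≠ 0` never returns to the entry `1` of
the identity for `n > 0`, so neither product has finite order; for `F_q S` the condition `c ≠ 0`
is `cos (π / q) ≠ 0`, which holds because `q > 2`.
-/

lemma one_add_pow_of_cube_eq_zero {m : Type*} [Fintype m] [DecidableEq m]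
    (N : Matrix m m ℝ) (hN : N * N * N = 0) (n : ℕ) :
    (1 + N) ^ n = 1 + (n : ℝ) • N + ((n : ℝ) * (n - 1) / 2) • (N * N) := by
  induction n with
  | zero => simp
  | succ k ih =>
    rw [pow_succ, ih]
    simp only [mul_add, add_mul, mul_one, one_mul, smul_mul_assoc, hN, smul_zero, add_zero]
    push_cast
    module

lemma not_isOfFinOrder_of_entry {m : Type*} [Fintype m] [DecidableEq m]
    (A : Matrix m m ℝ) (i : m) (c : ℝ) (hc : c ≠ 0)
    (h : ∀ n : ℕ, (A ^ n) i i = 1 + c * (n : ℝ) ^ 2) : ¬ IsOfFinOrder A := by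
  rw [isOfFinOrder_iff_pow_eq_one]
  rintro ⟨n, hn, hA⟩
  have h1 := h n
  rw [hA, Matrix.one_apply_eq] at h1
  have hn' : (n : ℝ) ≠ 0 := by exact_mod_cast hn.ne'
  have : c * (n : ℝ) ^ 2 ≠ 0 := mul_ne_zero hc (pow_ne_zero 2 hn')
  exact this (by linarith)

/-- **Infinite order of the products `S*V` and `F_q S`.** The last diagonal entry of
`(S* V)ⁿ` is `1 + 2n²` and that of `(F_q S)ⁿ` is `1 + 8cos²(π/q) n²`; consequently both
products have infinite multiplicative order. -/
theorem ssa_infinite_order (q : ℕ) (hq : q = 3 ∨ q = 4 ∨ q = 5) :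
    let S : Matrix (Fin 4) (Fin 4) ℝ := Matrix.diagonal ![-1, 1, 1, 1]
    let Sd : Matrix (Fin 4) (Fin 4) ℝ :=
      !![1, 0, 0, 0;
         0, -1, -2, 2;
         0, -2, -1, 2;
         0, -2, -2, 3]
    let V : Matrix (Fin 4) (Fin 4) ℝ := Matrix.diagonal ![1, -1, 1, 1]
    let F : Matrix (Fin 4) (Fin 4) ℝ :=
      !![-1, 0, 4 * cos (π / q), -4 * cos (π / q);
         0, 1, 0, 0;
         4 * cos (π / q), 0, 1 - 8 * cos (π / q) ^ 2, 8 * cos (π / q) ^ 2;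
         4 * cos (π / q), 0, -8 * cos (π / q) ^ 2, 1 + 8 * cos (π / q) ^ 2]
    (∀ n : ℕ, ((Sd * V) ^ n) 3 3 = 1 + 2 * (n : ℝ) ^ 2) ∧
      (∀ n : ℕ, ((F * S) ^ n) 3 3 = 1 + 8 * cos (π / q) ^ 2 * (n : ℝ) ^ 2) ∧
      ¬ IsOfFinOrder (Sd * V) ∧ ¬ IsOfFinOrder (F * S) := by
  have hcos : cos (π / q) ≠ 0 := by
    have hq2 : (2 : ℝ) < q := by
      rcases hq with rfl | rfl | rfl <;> norm_num
    apply ne_of_gt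
    apply cos_pos_of_mem_Ioo
    constructor
    · have : 0 < π / q := by positivity
      linarith [pi_pos]
    · exact div_lt_div_of_pos_left pi_pos two_pos hq2
  generalize cos (π / q) = c at hcos ⊢
  intro S Sd V F
  have h1 : ∀ n : ℕ, ((Sd * V) ^ n) 3 3 = 1 + 2 * (n : ℝ) ^ 2 := by
    intro n
    let N : Matrix (Fin 4) (Fin 4) ℝ :=
      !![0, 0, 0, 0;
         0, 0, -2, 2;
         0, 2, -2, 2;
         0, 2, -2, 2]
    have hA : Sd * V = 1 + N := by
      ext i j
      fin_cases i <;> fin_cases j <;> norm_num [Sd, V, N, Matrix.one_apply]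
    have hN : N * N * N = 0 := by
      ext i j
      fin_cases i <;> fin_cases j <;> norm_num [N]
    rw [hA, one_add_pow_of_cube_eq_zero N hN]
    simp [N]
    ring
  have h2 : ∀ n : ℕ, ((F * S) ^ n) 3 3 = 1 + 8 * c ^ 2 * (n : ℝ) ^ 2 := by
    intro n
    let N : Matrix (Fin 4) (Fin 4) ℝ :=
      !![0, 0, 4 * c, -4 * c;
         0, 0, 0, 0;
         -4 * c, 0, -8 * c ^ 2, 8 * c ^ 2;
         -4 * c, 0, -8 * c ^ 2, 8 * c ^ 2]
    have hA : F * S = 1 + N := by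
      ext i j
      fin_cases i <;> fin_cases j <;> simp [F, S, N] <;> ring
    have hN : N * N * N = 0 := by
      ext i j
      fin_cases i <;> fin_cases j <;> simp [N]
    rw [hA, one_add_pow_of_cube_eq_zero N hN]
    simp [N]
    ring
  exact ⟨h1, h2, not_isOfFinOrder_of_entry _ 3 2 two_ne_zero h1,
    not_isOfFinOrder_of_entry _ 3 _ (mul_ne_zero (by norm_num) (pow_ne_zero 2 hcos)) h2⟩
end

section
/- Let G be the 8×8 real symmetric matrix indexed by the sign vectors u, v ∈ {−1, 1}³ with entries G_{uv} = 1 − 2·#{ i : uᵢ ≠ vᵢ } (one minus twice the Hamming distance). Then the eigenvalues of G are −16 with multiplicity 1, 0 with multiplicity 4, and 8 with multiplicity 3; equivalently, the characteristic polynomial of G is X⁴·(X − 8)³·(X + 16). -/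
open Matrix Polynomial

/-!
With signs `s u i = ±1`, the Hamming distance of `u` and `v` is `(3 - ∑ i, s u i * s v i) / 2`, so
`G u v = -2 + ∑ i, s u i * s v i`. Hence `G = A * (D * Aᵀ)`, where the columns of the `8 × 4` matrix
`A` are the constant function `1` and the three coordinate functions, and `D = diag(-2, 1, 1, 1)`.
These columns are characters of `(ℤ/2)³`, so they are orthogonal with squared norm `8`, and
`(D * Aᵀ) * A = diag(-16, 8, 8, 8)`. The characteristic polynomials of `A * B` and `B * A` differ
only by the factor `X ^ (8 - 4)` (`Matrix.charpoly_mul_comm_of_le`).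
-/

/-- The constant character and the three coordinate characters of the cube, as columns; `true`
stands for the sign `1` and `false` for `-1`. -/
def cubeChar : Matrix (Fin 3 → Bool) (Option (Fin 3)) ℝ :=
  Matrix.of fun u j => j.elim 1 fun i => if u i then 1 else -1

/-- The coefficients of `G` in terms of the characters: `-2` on the constant one, `1` on the
coordinates. -/
def cubeCoeff : Option (Fin 3) → ℝ := fun j => j.elim (-2) fun _ => 1

lemma cube_gram_factor :
    (Matrix.of fun u v : Fin 3 → Bool =>
      1 - 2 * ((Finset.univ.filter fun i => u i ≠ v i).card : ℝ)) =
      cubeChar * (diagonal cubeCoeff * cubeCharᵀ) := by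
  ext u v
  rw [Matrix.mul_apply]
  simp only [Matrix.of_apply, diagonal_mul, transpose_apply, cubeChar, cubeCoeff,
    Fintype.sum_option, Option.elim, Fin.sum_univ_three, Finset.card_filter, Nat.cast_add]
  cases u 0 <;> cases u 1 <;> cases u 2 <;> cases v 0 <;> cases v 1 <;> cases v 2 <;> norm_num

lemma cubeChar_orthogonal (i j : Option (Fin 3)) :
    ∑ u, cubeChar u i * cubeChar u j = if i = j then 8 else 0 := by
  -- The entries are integers, and over `ℤ` the identity is decidable.
  have h : ∀ i j : Option (Fin 3), ∑ u : Fin 3 → Bool,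
      (i.elim 1 fun k => if u k then 1 else -1) * (j.elim 1 fun k => if u k then 1 else -1) =
      if i = j then (8 : ℤ) else 0 := by decide
  have hc : ∀ (u : Fin 3 → Bool) (i : Option (Fin 3)),
      cubeChar u i = ((i.elim 1 fun i => if u i then 1 else -1 : ℤ) : ℝ) := by
    intro u i
    cases i <;> simp [cubeChar]
  simp only [hc]
  exact_mod_cast h i j

lemma cube_dual_gram :
    diagonal cubeCoeff * cubeCharᵀ * cubeChar = diagonal fun j => 8 * cubeCoeff j := by
  ext i j
  rw [Matrix.mul_assoc, diagonal_mul, Matrix.mul_apply]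
  simp only [transpose_apply, cubeChar_orthogonal, diagonal_apply]
  split_ifs <;> ring

/-- **Möbius spectra of the cube.** The `8 × 8` Gramian of the disk packing projection of
an edge-scribed `3`-cube, with entries `1 − 2·(Hamming distance)` between vertices of
`{−1,1}³`, has characteristic polynomial `X⁴ (X − 8)³ (X + 16)`; equivalently its
eigenvalues are `−16` (multiplicity `1`), `0` (multiplicity `4`) and `8`
(multiplicity `3`). -/
theorem cube_mobius_spectra :
    let G : Matrix (Fin 3 → Bool) (Fin 3 → Bool) ℝ := Matrix.of fun u v =>
      1 - 2 * ((Finset.univ.filter fun i => u i ≠ v i).card : ℝ)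
    G.charpoly = X ^ 4 * (X - 8) ^ 3 * (X + 16) := by
  intro G
  have hG : G = cubeChar * (diagonal cubeCoeff * cubeCharᵀ) := cube_gram_factor
  rw [hG, charpoly_mul_comm_of_le _ _ (by simp), cube_dual_gram, charpoly_diagonal]
  have h8 : (C (8 : ℝ)) = 8 := rfl
  have h16 : (C (8 * -2 : ℝ)) = -16 := by
    rw [show (8 * -2 : ℝ) = -16 by norm_num, C_neg]; rfl
  simp only [Fintype.prod_option, cubeCoeff, Option.elim, mul_one, h8, h16]
  simp
  ring
end
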